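/- Let a < 0 and α > 1/(4a²) be reals. Then there exist no x > 0, p ∈ ℝ, and u ∈ [0,1] such that x·p = α, 2ax − x²u + 1 = 0, and 2xpu − 2ap − 1 − αu = 0 simultaneously hold. -/

import Mathlib

/-!
At a stationary point on `x p = α` with `x ≠ 0`, eliminating `u` between the two equations also
eliminates `a` and leaves `p = x`, so `α = x²`. Since `x² u = 2 a x + 1`, a nonnegative control
forces `x ≤ -1 / (2 a)`, and squaring gives `α ≤ 1 / (4 a²)`.
-/

namespace SensorScheduling

/-- The canonical vector field `f₂` of the scalar sensor-scheduling problem with source drift `a`,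
switching threshold `α` and control `u`. A point is a pair `(x, p)` of state and costate. -/
def canonicalField {R : Type*} [CommRing R] (a α u : R) : R × R → R × R
  | (x, p) => (2 * a * x - x ^ 2 * u + 1, 2 * x * p * u - 2 * a * p - 1 - α * u)

/-- The switching surface `S` with threshold `α`, on which the Hamiltonian does not depend on the
control; a point is a pair `(x, p)` of state and costate. -/
def switchingSurface {R : Type*} [CommRing R] [LT R] (α : R) : Set (R × R) :=
  {z | 0 < z.1 ∧ z.1 * z.2 = α}

theorem snd_eq_fst_of_canonicalField_eq_zero {R : Type*} [CommRing R] [NoZeroDivisors R]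
    {a α u : R} {z : R × R} (hx : z.1 ≠ 0) (hα : z.1 * z.2 = α)
    (hz : canonicalField a α u z = 0) : z.2 = z.1 := by
  obtain ⟨x, p⟩ := z
  obtain ⟨hstate, hcostate⟩ : 2 * a * x - x ^ 2 * u + 1 = 0 ∧
      2 * x * p * u - 2 * a * p - 1 - α * u = 0 := Prod.ext_iff.mp hz
  subst hα
  have hmul : x * p = x * x := by
    linear_combination x * p * hstate + x ^ 2 * hcostate
  exact mul_left_cancel₀ hx hmul

variable {K : Type*} [Field K] [LinearOrder K] [IsStrictOrderedRing K] {a α u : K} {z : K × K}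

theorem fst_le_of_fst_canonicalField_eq_zero (ha : a < 0) (hu : 0 ≤ u)
    (hz : (canonicalField a α u z).1 = 0) : z.1 ≤ -1 / (2 * a) := by
  obtain ⟨x, p⟩ := z
  have hstate : 2 * a * x - x ^ 2 * u + 1 = 0 := hz
  have hgain : 0 ≤ x ^ 2 * u := mul_nonneg (sq_nonneg x) hu
  rw [le_div_iff_of_neg (by linarith)]
  linarith

end SensorScheduling

open SensorScheduling in
theorem stmt16_general {K : Type*} [Field K] [LinearOrder K] [IsStrictOrderedRing K]
    {a α u : K} {z : K × K} (ha : a < 0) (hα : 1 / (4 * a ^ 2) < α) (hu : 0 ≤ u)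
    (hz : z ∈ switchingSurface α) : canonicalField a α u z ≠ 0 := by
  intro hzero
  obtain ⟨hx, hxp⟩ := hz
  have hpx : z.2 = z.1 := snd_eq_fst_of_canonicalField_eq_zero hx.ne' hxp hzero
  have hle : z.1 ≤ -1 / (2 * a) :=
    fst_le_of_fst_canonicalField_eq_zero ha hu (congrArg Prod.fst hzero)
  refine hα.not_ge ?_
  calc
    α = z.1 ^ 2 := by rw [← hxp, hpx, sq]
    _ ≤ (-1 / (2 * a)) ^ 2 := by gcongr
    _ = 1 / (4 * a ^ 2) := by ring

theorem stmt16 (a α : ℝ) (ha : a < 0) (hα : 1 / (4 * a ^ 2) < α) :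
    ¬ ∃ (x p u : ℝ), 0 < x ∧ u ∈ Set.Icc (0 : ℝ) 1 ∧ x * p = α ∧
      2 * a * x - x ^ 2 * u + 1 = 0 ∧
      2 * x * p * u - 2 * a * p - 1 - α * u = 0 := by
  rintro ⟨x, p, u, hx, hu, hxp, hstate, hcostate⟩
  exact stmt16_general (z := (x, p)) ha hα hu.1 ⟨hx, hxp⟩ (Prod.ext hstate hcostate)
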